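/- Let M ≥ 1, N ≥ 1, let A be a real N×N matrix with ν = ‖A‖ > 0, let h > 0 satisfy hν ≤ 1/2, and let T = (M−1)h. Let Ã_b = I_{MN} − S ⊗ I_N − h·(E ⊗ A) be the backward-Euler block matrix. If ‖(I_N − h·A)⁻¹‖ > 1, then the condition number of Ã_b satisfies κ(Ã_b) = ‖Ã_b‖·‖Ã_b⁻¹‖ ≤ 5·e^{2νT}/(hν). -/

import Mathlib

open Matrix
open scoped Kronecker

/-- The ℓ²→ℓ² operator (spectral) norm of a matrix. -/
noncomputable def specNorm {𝕜 : Type*} [RCLike 𝕜] {n : Type*} [Fintype n] [DecidableEq n]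
    (A : Matrix n n 𝕜) : ℝ :=
  ‖LinearMap.toContinuousLinearMap (Matrix.toEuclideanLin A)‖

/-- The M×M subdiagonal shift matrix: entry (i,j) is 1 if i = j+1 and 0 otherwise. -/
def shiftMatrix (M : ℕ) : Matrix (Fin M) (Fin M) ℝ :=
  Matrix.of fun i j => if (i : ℕ) = (j : ℕ) + 1 then 1 else 0

/-- The M×M diagonal matrix with first diagonal entry 0 and all other diagonal entries 1. -/
def ediagMatrix (M : ℕ) : Matrix (Fin M) (Fin M) ℝ :=
  Matrix.of fun i j => if i = j ∧ (i : ℕ) ≠ 0 then 1 else 0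

open scoped Matrix.Norms.L2Operator in
lemma aux_specNorm {n : Type*} [Fintype n] [DecidableEq n] (A : Matrix n n ℝ) :
    specNorm A = ‖A‖ := by
  rw [Matrix.l2_opNorm_def]; rfl

open scoped Matrix.Norms.L2Operator in
lemma aux_one_kron {M N : ℕ} (B : Matrix (Fin N) (Fin N) ℝ) :
    ‖(1 : Matrix (Fin M) (Fin M) ℝ) ⊗ₖ B‖ ≤ ‖B‖ := by
  rw [Matrix.l2_opNorm_def]
  refine ContinuousLinearMap.opNorm_le_bound _ (norm_nonneg _) fun x => ?_
  refine abs_le_of_sq_le_sq' ?_ (by positivity) |>.2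
  rw [mul_pow, EuclideanSpace.norm_sq_eq, EuclideanSpace.norm_sq_eq, Fintype.sum_prod_type,
    Fintype.sum_prod_type, Finset.mul_sum]
  refine Finset.sum_le_sum fun i _ => ?_
  have key := Matrix.l2_opNorm_mulVec B (WithLp.toLp 2 fun k => x (i, k))
  have key2 := pow_le_pow_left₀ (norm_nonneg _) key 2
  rw [mul_pow, EuclideanSpace.norm_sq_eq, EuclideanSpace.norm_sq_eq] at key2
  refine le_trans (le_of_eq ?_) key2
  refine Finset.sum_congr rfl fun j _ => ?_
  congr 2
  simp [Matrix.toLpLin_apply, Matrix.mulVec, dotProduct, Fintype.sum_prod_type,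
    Matrix.one_apply, ite_mul, Finset.sum_ite_eq]

open scoped Matrix.Norms.L2Operator in
lemma aux_ediag {M N : ℕ} :
    ‖ediagMatrix M ⊗ₖ (1 : Matrix (Fin N) (Fin N) ℝ)‖ ≤ 1 := by
  have : ediagMatrix M ⊗ₖ (1 : Matrix (Fin N) (Fin N) ℝ)
      = Matrix.diagonal fun p : Fin M × Fin N => if (p.1 : ℕ) ≠ 0 then (1:ℝ) else 0 := by
    ext ⟨i, k⟩ ⟨j, l⟩
    simp only [Matrix.kroneckerMap_apply, ediagMatrix, Matrix.of_apply, Matrix.one_apply,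
      Matrix.diagonal_apply, Prod.mk.injEq]
    split_ifs <;> simp_all
  rw [this, Matrix.l2_opNorm_diagonal]
  refine (pi_norm_le_iff_of_nonneg zero_le_one).2 fun p => ?_
  split_ifs <;> simp

open scoped Matrix.Norms.L2Operator in
lemma aux_shift {M N : ℕ} :
    ‖shiftMatrix M ⊗ₖ (1 : Matrix (Fin N) (Fin N) ℝ)‖ ≤ 1 := by
  have h1 : (shiftMatrix M ⊗ₖ (1 : Matrix (Fin N) (Fin N) ℝ))ᴴ *
      (shiftMatrix M ⊗ₖ (1 : Matrix (Fin N) (Fin N) ℝ))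
      = Matrix.diagonal fun p : Fin M × Fin N => if (p.1 : ℕ) + 1 < M then (1:ℝ) else 0 := by
    rw [Matrix.conjTranspose_kronecker, ← Matrix.mul_kronecker_mul]
    have : (shiftMatrix M)ᴴ * shiftMatrix M =
        Matrix.diagonal fun i : Fin M => if (i : ℕ) + 1 < M then (1:ℝ) else 0 := by
      ext i j
      simp only [Matrix.mul_apply, Matrix.conjTranspose_apply, shiftMatrix, Matrix.of_apply,
        Matrix.diagonal_apply]
      by_cases hi : (i : ℕ) + 1 < M
      · rw [Finset.sum_eq_single ⟨i + 1, hi⟩]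
        · simp [hi, Fin.ext_iff]
        · intro b _ hb
          have : (b : ℕ) ≠ i + 1 := fun e => hb (Fin.ext e)
          simp [this]
        · simp
      · rw [Finset.sum_eq_zero]
        · simp [hi]
        · intro b _
          have : (b : ℕ) ≠ i + 1 := by omega
          simp [this]
    rw [this, Matrix.conjTranspose_one, mul_one, ← Matrix.diagonal_one,
      Matrix.diagonal_kronecker_diagonal]
    simp
  have h2 := Matrix.l2_opNorm_conjTranspose_mul_self
    (shiftMatrix M ⊗ₖ (1 : Matrix (Fin N) (Fin N) ℝ))
  rw [h1, Matrix.l2_opNorm_diagonal] at h2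
  have h3 : ‖fun p : Fin M × Fin N => if (p.1 : ℕ) + 1 < M then (1:ℝ) else 0‖ ≤ 1 := by
    refine (pi_norm_le_iff_of_nonneg zero_le_one).2 fun p => ?_
    split_ifs <;> simp
  rw [h2] at h3
  nlinarith [norm_nonneg (shiftMatrix M ⊗ₖ (1 : Matrix (Fin N) (Fin N) ℝ))]

lemma aux_shift_pow (M m : ℕ) (i j : Fin M) (hij : (i : ℕ) < j + m) :
    (shiftMatrix M ^ m) i j = 0 := by
  induction m generalizing i with
  | zero =>
    have : i ≠ j := by rintro rfl; omega
    simp [this]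
  | succ m ih =>
    rw [pow_succ', Matrix.mul_apply]
    refine Finset.sum_eq_zero fun k _ => ?_
    by_cases hk : (i : ℕ) = k + 1
    · rw [ih k (by omega), mul_zero]
    · simp [shiftMatrix, hk]

lemma aux_ES (M : ℕ) : ediagMatrix M * shiftMatrix M = shiftMatrix M := by
  ext i j
  rw [Matrix.mul_apply, Finset.sum_eq_single i]
  · by_cases hi : (i : ℕ) = j + 1
    · simp [ediagMatrix, shiftMatrix, hi]
    · simp [shiftMatrix, hi]
  · intro b _ hb
    simp [ediagMatrix, hb.symm]
  · simp

open scoped Matrix.Norms.L2Operator in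
lemma aux_neumann {n : Type*} [Fintype n] [DecidableEq n] [Nonempty n] (X : Matrix n n ℝ) (t : ℝ)
    (hX : ‖X‖ ≤ t) (ht : t ≤ 1 / 2) :
    IsUnit (1 - X) ∧ ‖(1 - X)⁻¹‖ ≤ 1 + 2 * t := by
  haveI : CompleteSpace (Matrix n n ℝ) := FiniteDimensional.complete ℝ _
  have hu : IsUnit (1 - X) := isUnit_one_sub_of_norm_lt_one (by linarith)
  refine ⟨hu, ?_⟩
  have h0 := norm_nonneg X
  have e : (1 - X)⁻¹ = 1 + X * (1 - X)⁻¹ := by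
    have := Matrix.mul_nonsing_inv (1 - X) ((Matrix.isUnit_iff_isUnit_det _).1 hu)
    rw [sub_mul, one_mul, sub_eq_iff_eq_add] at this
    exact this
  have h1 : ‖(1 - X)⁻¹‖ ≤ 1 + t * ‖(1 - X)⁻¹‖ := by
    conv_lhs => rw [e]
    refine (norm_add_le _ _).trans ?_
    have : ‖(1 : Matrix n n ℝ)‖ = 1 := norm_one
    rw [this]
    gcongr
    exact (norm_mul_le _ _).trans (by gcongr)
  nlinarith [norm_nonneg (1 - X)⁻¹]

open scoped Matrix.Norms.L2Operator in
theorem stmt17 {M N : ℕ} (hM : 1 ≤ M) (hN : 1 ≤ N)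
    (A : Matrix (Fin N) (Fin N) ℝ) (ν : ℝ) (hν : ν = specNorm A) (hνpos : 0 < ν)
    (h : ℝ) (hh : 0 < h) (hhν : h * ν ≤ 1 / 2)
    (T : ℝ) (hT : T = ((M : ℝ) - 1) * h)
    (hBinv : specNorm ((1 : Matrix (Fin N) (Fin N) ℝ) - h • A)⁻¹ > 1) :
    specNorm ((1 : Matrix (Fin M × Fin N) (Fin M × Fin N) ℝ)
        - shiftMatrix M ⊗ₖ (1 : Matrix (Fin N) (Fin N) ℝ)
        - h • (ediagMatrix M ⊗ₖ A)) *
      specNorm ((1 : Matrix (Fin M × Fin N) (Fin M × Fin N) ℝ)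
        - shiftMatrix M ⊗ₖ (1 : Matrix (Fin N) (Fin N) ℝ)
        - h • (ediagMatrix M ⊗ₖ A))⁻¹
      ≤ 5 * Real.exp (2 * ν * T) / (h * ν) := by
  haveI : Nonempty (Fin N) := ⟨⟨0, hN⟩⟩
  haveI : Nonempty (Fin M) := ⟨⟨0, hM⟩⟩
  simp only [aux_specNorm] at *
  clear hBinv
  have ht : 0 < h * ν := mul_pos hh hνpos
  have hA : ‖h • A‖ ≤ h * ν := by rw [norm_smul, Real.norm_of_nonneg hh.le, hν]
  have hEA : ‖h • (ediagMatrix M ⊗ₖ A)‖ ≤ h * ν := by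
    rw [norm_smul, Real.norm_of_nonneg hh.le]
    gcongr
    have : ediagMatrix M ⊗ₖ A = (ediagMatrix M ⊗ₖ (1 : Matrix (Fin N) (Fin N) ℝ)) *
        ((1 : Matrix (Fin M) (Fin M) ℝ) ⊗ₖ A) := by
      rw [← Matrix.mul_kronecker_mul, mul_one, one_mul]
    rw [this, hν]
    refine (norm_mul_le _ _).trans ?_
    calc _ ≤ 1 * ‖A‖ := by
          gcongr
          · exact aux_ediag
          · exact aux_one_kron A
      _ = _ := one_mul _
  obtain ⟨hRu, hR⟩ := aux_neumann _ _ hA hhν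
  obtain ⟨hDu, hD⟩ := aux_neumann _ _ hEA hhν
  set R := (1 - h • A)⁻¹ with hRdef
  set D := 1 - h • (ediagMatrix M ⊗ₖ A) with hDdef
  set b := 1 + 2 * (h * ν) with hb
  set P := shiftMatrix M ⊗ₖ R with hPdef
  have hRR : (1 - h • A) * R = 1 :=
    Matrix.mul_nonsing_inv _ ((Matrix.isUnit_iff_isUnit_det _).1 hRu)
  have hDP : D * P = shiftMatrix M ⊗ₖ (1 : Matrix (Fin N) (Fin N) ℝ) := by
    rw [hDdef, hPdef, sub_mul, one_mul, Matrix.smul_mul, ← Matrix.mul_kronecker_mul, aux_ES,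
      ← Matrix.kronecker_smul, ← hRR, sub_mul, one_mul, Matrix.smul_mul, sub_eq_add_neg,
      sub_eq_add_neg, Matrix.kronecker_add]
    congr 1
    ext ⟨i, k⟩ ⟨j, l⟩
    simp
  have hL : (1 : Matrix (Fin M × Fin N) (Fin M × Fin N) ℝ)
        - shiftMatrix M ⊗ₖ (1 : Matrix (Fin N) (Fin N) ℝ)
        - h • (ediagMatrix M ⊗ₖ A) = D * (1 - P) := by
    rw [mul_sub, hDP, mul_one, hDdef]; abel
  have hP : ‖P‖ ≤ b := by
    have : P = (shiftMatrix M ⊗ₖ (1 : Matrix (Fin N) (Fin N) ℝ)) *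
        ((1 : Matrix (Fin M) (Fin M) ℝ) ⊗ₖ R) := by
      rw [← Matrix.mul_kronecker_mul, mul_one, one_mul]
    rw [this]
    refine (norm_mul_le _ _).trans ?_
    calc _ ≤ 1 * b := by
          gcongr
          · exact aux_shift
          · exact (aux_one_kron R).trans hR
      _ = _ := one_mul _
  have hPpow : ∀ m : ℕ, P ^ m = (shiftMatrix M ^ m) ⊗ₖ (R ^ m) := by
    intro m
    induction m with
    | zero => simp
    | succ m ih => rw [pow_succ, ih, hPdef, ← Matrix.mul_kronecker_mul, ← pow_succ, ← pow_succ]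
  have hPM : P ^ M = 0 := by
    have : shiftMatrix M ^ M = 0 := by
      ext i j
      exact aux_shift_pow M M i j (by omega)
    rw [hPpow, this, Matrix.zero_kronecker]
  have hinv : (1 - P)⁻¹ = ∑ m ∈ Finset.range M, P ^ m := by
    apply Matrix.inv_eq_left_inv
    rw [geom_sum_mul_neg, hPM, sub_zero]
  have hb1 : 1 < b := by linarith
  have hsum : ‖(1 - P)⁻¹‖ ≤ ∑ m ∈ Finset.range M, b ^ m := by
    rw [hinv]
    refine norm_sum_le_of_le _ fun m _ => ?_
    refine (norm_pow_le _ _).trans ?_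
    gcongr
  rw [geom_sum_eq hb1.ne'] at hsum
  have hbM : b ^ (M - 1) ≤ Real.exp (2 * ν * T) := by
    have : b ≤ Real.exp (2 * (h * ν)) := by
      have := Real.add_one_le_exp (2 * (h * ν)); linarith
    refine (pow_le_pow_left₀ (by linarith) this _).trans ?_
    rw [← Real.exp_nat_mul, hT, Nat.cast_sub hM]
    apply le_of_eq; congr 1; push_cast; ring
  have hnorm : ‖D * (1 - P)‖ ≤ 5 / 2 := by
    rw [← hL]
    refine (norm_sub_le _ _).trans ?_
    have h1 := norm_sub_le (1 : Matrix (Fin M × Fin N) (Fin M × Fin N) ℝ)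
      (shiftMatrix M ⊗ₖ (1 : Matrix (Fin N) (Fin N) ℝ))
    have h2 : ‖(1 : Matrix (Fin M × Fin N) (Fin M × Fin N) ℝ)‖ = 1 := norm_one
    have h3 := aux_shift (M := M) (N := N)
    linarith
  have hbound : ‖(D * (1 - P))⁻¹‖ ≤ 2 * Real.exp (2 * ν * T) / (h * ν) := by
    rw [Matrix.mul_inv_rev]
    refine (norm_mul_le _ _).trans ?_
    calc _ ≤ ((b ^ M - 1) / (b - 1)) * b := mul_le_mul hsum hD (norm_nonneg _) ((norm_nonneg _).trans hsum)
      _ ≤ 2 * b ^ (M - 1) / (h * ν) := by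
        have e : b ^ M = b ^ (M - 1) * b := by rw [← pow_succ]; congr 1; omega
        have e2 : b - 1 = 2 * (h * ν) := by rw [hb]; ring
        rw [e, e2, div_mul_eq_mul_div, div_le_div_iff₀ (by positivity) ht]
        have hb2 : b ≤ 2 := by linarith
        have hp : 0 < b ^ (M - 1) := by positivity
        have : (b ^ (M - 1) * b - 1) * b ≤ 4 * b ^ (M - 1) := by
          have : b * b ≤ 4 := by nlinarith
          nlinarith
        nlinarith
      _ ≤ _ := by gcongr
  rw [hL]
  calc _ ≤ 5 / 2 * (2 * Real.exp (2 * ν * T) / (h * ν)) := by gcongr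
    _ = _ := by ring
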